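/- Given a decomposition S = (A⊗B) ⊕ (A⊗B)^⊥, a channel E on L(S), a fixed density matrix σ_A on A, and a channel R such that R∘E(σ_A ⊗ σ_B) = σ_A ⊗ σ_B for all density matrices σ_B on B, there exists a unit vector |α⟩ ∈ A (any eigenvector of σ_A with nonzero eigenvalue) and a channel R_α such that R_α∘E(|α⟩⟨α| ⊗ σ_B) = |α⟩⟨α| ⊗ σ_B for all σ_B; i.e., the subspace |α⟩ ⊗ B is a correctable code for E of the same dimension as B. -/

import Mathlib

open Matrix Kronecker ComplexOrder

/-- A map on matrices is a quantum channel if it admits a trace-preserving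
Kraus decomposition. -/
def IsQChannel {n : ℕ}
    (Φ : Matrix (Fin n) (Fin n) ℂ → Matrix (Fin n) (Fin n) ℂ) : Prop :=
  ∃ (r : ℕ) (K : Fin r → Matrix (Fin n) (Fin n) ℂ),
    (∀ ρ, Φ ρ = ∑ i, K i * ρ * (K i)ᴴ) ∧ ∑ i, (K i)ᴴ * K i = 1

lemma isQChannel_of_fintype {n : ℕ} {ι : Type*} [Fintype ι] (K : ι → Matrix (Fin n) (Fin n) ℂ)
    (h : ∑ i, (K i)ᴴ * K i = 1) : IsQChannel (fun ρ => ∑ i, K i * ρ * (K i)ᴴ) := by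
  refine ⟨Fintype.card ι, fun i => K ((Fintype.equivFin ι).symm i), fun ρ => ?_, ?_⟩
  · exact ((Fintype.equivFin ι).symm.sum_comp (fun i => K i * ρ * (K i)ᴴ)).symm
  · rw [← h]
    exact (Fintype.equivFin ι).symm.sum_comp (fun i => (K i)ᴴ * K i)

lemma IsQChannel.comp' {n : ℕ} {F G : Matrix (Fin n) (Fin n) ℂ → Matrix (Fin n) (Fin n) ℂ}
    (hF : IsQChannel F) (hG : IsQChannel G) : IsQChannel (fun ρ => F (G ρ)) := by
  obtain ⟨r, K, hK, hK1⟩ := hF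
  obtain ⟨t, L, hL, hL1⟩ := hG
  have := isQChannel_of_fintype (fun p : Fin t × Fin r => K p.2 * L p.1) (by
    rw [Fintype.sum_prod_type]
    simp only [conjTranspose_mul]
    rw [← hL1]
    refine Finset.sum_congr rfl fun i _ => ?_
    calc _ = (L i)ᴴ * (∑ j, (K j)ᴴ * K j) * L i := by
          simp only [Finset.mul_sum, Finset.sum_mul, Matrix.mul_assoc]
      _ = _ := by rw [hK1, Matrix.mul_one])
  convert this using 2 with ρ
  rw [hK, hL, Fintype.sum_prod_type, Finset.sum_comm]
  refine Finset.sum_congr rfl fun i _ => ?_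
  simp only [Finset.mul_sum, Finset.sum_mul, Matrix.mul_assoc, conjTranspose_mul]

lemma IsQChannel.map_add' {n : ℕ} {F : Matrix (Fin n) (Fin n) ℂ → Matrix (Fin n) (Fin n) ℂ}
    (hF : IsQChannel F) (x y) : F (x + y) = F x + F y := by
  obtain ⟨r, K, hK, hK1⟩ := hF
  simp only [hK, Matrix.mul_add, Matrix.add_mul, Finset.sum_add_distrib]

lemma IsQChannel.map_smul' {n : ℕ} {F : Matrix (Fin n) (Fin n) ℂ → Matrix (Fin n) (Fin n) ℂ}
    (hF : IsQChannel F) (c : ℂ) (y) : F (c • y) = c • F y := by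
  obtain ⟨r, K, hK, hK1⟩ := hF
  simp only [hK, Matrix.mul_smul, Matrix.smul_mul, Finset.smul_sum]

lemma IsQChannel.map_sum' {n : ℕ} {F : Matrix (Fin n) (Fin n) ℂ → Matrix (Fin n) (Fin n) ℂ}
    (hF : IsQChannel F) {ι : Type*} (S : Finset ι) (f : ι → _) :
    F (∑ i ∈ S, f i) = ∑ i ∈ S, F (f i) := by
  obtain ⟨r, K, hK, hK1⟩ := hF
  simp only [hK, Finset.mul_sum, Finset.sum_mul]
  rw [Finset.sum_comm]

lemma IsQChannel.map_psd {n : ℕ} {F : Matrix (Fin n) (Fin n) ℂ → Matrix (Fin n) (Fin n) ℂ}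
    (hF : IsQChannel F) {x} (hx : x.PosSemidef) : (F x).PosSemidef := by
  obtain ⟨r, K, hK, hK1⟩ := hF
  rw [hK]
  exact posSemidef_sum _ fun i _ => hx.mul_mul_conjTranspose_same (K i)

lemma IsQChannel.trace' {n : ℕ} {F : Matrix (Fin n) (Fin n) ℂ → Matrix (Fin n) (Fin n) ℂ}
    (hF : IsQChannel F) (x) : (F x).trace = x.trace := by
  obtain ⟨r, K, hK, hK1⟩ := hF
  rw [hK, trace_sum]
  calc _ = ((∑ i, (K i)ᴴ * K i) * x).trace := by
        rw [Finset.sum_mul, trace_sum]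
        refine Finset.sum_congr rfl fun i _ => ?_
        rw [Matrix.trace_mul_comm, Matrix.mul_assoc]
    _ = _ := by rw [hK1, Matrix.one_mul]

lemma psd_decomp {n : ℕ} {M : Matrix (Fin n) (Fin n) ℂ} (hM : M.PosSemidef) :
    ∃ (l : Fin n → ℝ) (u : Fin n → Fin n → ℂ), (∀ i, 0 ≤ l i) ∧ (∀ i, star (u i) ⬝ᵥ u i = 1) ∧
      M = ∑ i, (l i : ℂ) • vecMulVec (u i) (star (u i)) := by
  refine ⟨hM.1.eigenvalues, fun i => ⇑(hM.1.eigenvectorBasis i), hM.eigenvalues_nonneg, ?_, ?_⟩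
  · intro i
    have h := hM.1.eigenvectorBasis.orthonormal.1 i
    have h2 := inner_self_eq_norm_sq_to_K (𝕜 := ℂ) (hM.1.eigenvectorBasis i)
    rw [h] at h2
    rw [EuclideanSpace.inner_eq_star_dotProduct] at h2
    rw [dotProduct_comm]
    simpa using h2
  · have h := hM.1.spectral_theorem
    conv_lhs => rw [h]
    ext i j
    simp [Matrix.mul_apply, Unitary.conjStarAlgAut_apply, Matrix.sum_apply, vecMulVec_apply,
      Matrix.diagonal_apply, IsHermitian.eigenvectorUnitary_apply, star_eq_conjTranspose]
    refine Finset.sum_congr rfl fun k _ => ?_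
    ring

lemma rank_one_dominated {n : ℕ} {X : Matrix (Fin n) (Fin n) ℂ} {v : Fin n → ℂ} {p : ℝ}
    (hp : 0 < p) (hX : X.PosSemidef) (htr : X.trace = 1) {Y : Matrix (Fin n) (Fin n) ℂ}
    (hY : Y.PosSemidef) (h : vecMulVec v (star v) = (p : ℂ) • X + Y) (hv : star v ⬝ᵥ v = 1) :
    X = vecMulVec v (star v) := by
  have key : ∀ w, star v ⬝ᵥ w = 0 → X *ᵥ w = 0 := by
    intro w hw
    rw [← hX.dotProduct_mulVec_zero_iff]
    have h1 : star w ⬝ᵥ (vecMulVec v (star v) *ᵥ w) = 0 := by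
      rw [vecMulVec_mulVec, hw]; simp
    rw [h, add_mulVec, dotProduct_add, smul_mulVec, dotProduct_smul] at h1
    have a1 := hX.dotProduct_mulVec_nonneg w
    have a2 := hY.dotProduct_mulVec_nonneg w
    have hp' : (0 : ℂ) < p := by exact_mod_cast hp
    have h3 := (add_eq_zero_iff_of_nonneg (smul_nonneg hp'.le a1) a2).1 h1
    simpa [hp.ne'] using h3.1
  have hXv : X = X * vecMulVec v (star v) := by
    apply Matrix.ext_of_mulVec_single
    intro i
    have := key (Pi.single i 1 - (star v ⬝ᵥ Pi.single i 1) • v) (by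
      rw [dotProduct_sub, dotProduct_smul, hv]; simp)
    rw [mulVec_sub, sub_eq_zero] at this
    rw [this, ← mulVec_mulVec, vecMulVec_mulVec]
    simp
  have hXv2 : X = vecMulVec v (star v) * X := by
    have := congrArg conjTranspose hXv
    rw [conjTranspose_mul, hX.1.eq, conjTranspose_vecMulVec, star_star] at this
    exact this
  have hc : X = (star v ⬝ᵥ (X *ᵥ v)) • vecMulVec v (star v) := by
    conv_lhs => rw [hXv2, hXv, mul_vecMulVec, vecMulVec_mul_vecMulVec]
    simp [vecMulVec_smul]
  have ht := congrArg trace hc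
  rw [htr, trace_smul, trace_vecMulVec, dotProduct_comm, dotProduct_comm v, hv] at ht
  rw [hc, dotProduct_comm, ← smul_eq_mul (a := _ ⬝ᵥ _) (b := (1:ℂ)) |>.trans (mul_one _), ← ht, one_smul]

lemma exists_reset {s a b : ℕ}
    (W : Matrix (Fin s) (Fin a × Fin b) ℂ) (hW : Wᴴ * W = 1) (α : Fin a → ℂ)
    (hα : star α ⬝ᵥ α = 1) :
    ∃ T : Matrix (Fin s) (Fin s) ℂ → Matrix (Fin s) (Fin s) ℂ, IsQChannel T ∧
      ∀ (σA : Matrix (Fin a) (Fin a) ℂ) (σB : Matrix (Fin b) (Fin b) ℂ), σA.trace = 1 →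
        T (W * (σA ⊗ₖ σB) * Wᴴ) = W * (vecMulVec α (star α) ⊗ₖ σB) * Wᴴ := by
  let J : Fin a → Matrix (Fin a × Fin b) (Fin a × Fin b) ℂ :=
    fun m => vecMulVec α (Pi.single m 1) ⊗ₖ (1 : Matrix (Fin b) (Fin b) ℂ)
  let K : Option (Fin a) → Matrix (Fin s) (Fin s) ℂ :=
    fun o => o.elim (1 - W * Wᴴ) (fun m => W * J m * Wᴴ)
  have hJH : ∀ m, (J m)ᴴ = vecMulVec (Pi.single m 1) (star α) ⊗ₖ (1 : Matrix (Fin b) (Fin b) ℂ) := by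
    intro m
    simp [J, conjTranspose_kronecker, conjTranspose_vecMulVec]
  have hW' : ∀ {k : ℕ} (M : Matrix (Fin a × Fin b) (Fin k) ℂ), Wᴴ * (W * M) = M := by
    intro k M
    rw [← Matrix.mul_assoc, hW, Matrix.one_mul]
  refine ⟨_, isQChannel_of_fintype K ?_, ?_⟩
  · have hJ : ∑ m, (J m)ᴴ * J m = 1 := by
      have : ∀ m, (J m)ᴴ * J m = Matrix.single m m (1:ℂ) ⊗ₖ (1 : Matrix (Fin b) (Fin b) ℂ) := by
        intro m
        rw [hJH]
        simp only [J]
        rw [← mul_kronecker_mul, vecMulVec_mul_vecMulVec, hα, Matrix.mul_one, one_smul,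
          Matrix.single_eq_single_vecMulVec_single]
      simp only [this]
      ext ⟨i, j⟩ ⟨k, l⟩
      simp [Matrix.sum_apply, kroneckerMap_apply, Matrix.single_apply, Matrix.one_apply]
      by_cases hik : i = k
      · subst hik
        simp [Finset.filter_eq']
      · have : ∀ x, ¬ (x = i ∧ x = k) := fun x hx => hik (hx.1.symm.trans hx.2)
        simp [this, hik]
    have h1 : ∀ m, (K (some m))ᴴ * K (some m) = W * ((J m)ᴴ * J m) * Wᴴ := by
      intro m
      simp only [K, Option.elim, conjTranspose_mul, conjTranspose_conjTranspose, Matrix.mul_assoc, hW']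
    have h0 : (K none)ᴴ * K none = 1 - W * Wᴴ := by
      simp [K, Matrix.mul_sub, Matrix.sub_mul, Matrix.mul_assoc, hW']
    rw [Fintype.sum_option, h0]
    simp only [h1]
    rw [← Matrix.sum_mul, ← Matrix.mul_sum, hJ]
    simp
  · intro σA σB htr
    have h0 : K none * (W * (σA ⊗ₖ σB) * Wᴴ) * (K none)ᴴ = 0 := by
      have : K none * W = 0 := by
        simp [K, Matrix.sub_mul, Matrix.mul_assoc, hW]
      rw [← Matrix.mul_assoc, ← Matrix.mul_assoc, this]
      simp
    have h1 : ∀ m, K (some m) * (W * (σA ⊗ₖ σB) * Wᴴ) * (K (some m))ᴴ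
        = σA m m • (W * (vecMulVec α (star α) ⊗ₖ σB) * Wᴴ) := by
      intro m
      have e1 : J m * (σA ⊗ₖ σB) * (J m)ᴴ = σA m m • (vecMulVec α (star α) ⊗ₖ σB) := by
        rw [hJH]
        simp only [J]
        rw [← mul_kronecker_mul, ← mul_kronecker_mul, Matrix.one_mul, Matrix.mul_one,
          vecMulVec_mul, vecMulVec_mul_vecMulVec, ← smul_kronecker]
        simp [vecMulVec_smul]
      calc _ = W * (J m * (σA ⊗ₖ σB) * (J m)ᴴ) * Wᴴ := by
            simp only [K, Option.elim, conjTranspose_mul, conjTranspose_conjTranspose,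
              Matrix.mul_assoc, hW']
        _ = _ := by rw [e1]; simp
    beta_reduce
    rw [Fintype.sum_option, h0]
    simp only [h1]
    rw [← Finset.sum_smul]
    have : ∑ i, σA i i = 1 := htr
    rw [this]; simp

lemma W_rank_one {s a b : ℕ}
    (W : Matrix (Fin s) (Fin a × Fin b) ℂ) (hW : Wᴴ * W = 1) (α : Fin a → ℂ)
    (hα : star α ⬝ᵥ α = 1) (ψ : Fin b → ℂ) (hψ : star ψ ⬝ᵥ ψ = 1) :
    ∃ v : Fin s → ℂ, star v ⬝ᵥ v = 1 ∧
      W * (vecMulVec α (star α) ⊗ₖ vecMulVec ψ (star ψ)) * Wᴴ = vecMulVec v (star v) := by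
  let x : Fin a × Fin b → ℂ := fun p => α p.1 * ψ p.2
  have hx : vecMulVec α (star α) ⊗ₖ vecMulVec ψ (star ψ) = vecMulVec x (star x) := by
    ext ⟨i, j⟩ ⟨k, l⟩
    simp [x, vecMulVec_apply, kroneckerMap_apply]
    ring
  have hxx : star x ⬝ᵥ x = 1 := by
    rw [← one_mul (1:ℂ)]
    nth_rw 1 [← hα]
    rw [← hψ]
    simp only [dotProduct, x, Fintype.sum_prod_type, Finset.sum_mul_sum]
    refine Finset.sum_congr rfl fun i _ => Finset.sum_congr rfl fun j _ => ?_
    simp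
    ring
  refine ⟨W *ᵥ x, ?_, ?_⟩
  · rw [star_mulVec, ← dotProduct_mulVec, mulVec_mulVec, hW, one_mulVec, hxx]
  · rw [hx, mul_vecMulVec, vecMulVec_mul, star_mulVec]

/-- Every generalized operator quantum error correcting code yields a standard
subspace error correcting code of the same size: if R∘E(σ_A ⊗ σ_B) = σ_A ⊗ σ_B
for all states σ_B, then there is a unit vector |α⟩ ∈ A and a channel R_α with
R_α∘E(|α⟩⟨α| ⊗ σ_B) = |α⟩⟨α| ⊗ σ_B for all σ_B. -/
theorem genOQECC_implies_subspace_code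
    {s a b : ℕ}
    (W : Matrix (Fin s) (Fin a × Fin b) ℂ) (hW : Wᴴ * W = 1)
    (E R : Matrix (Fin s) (Fin s) ℂ → Matrix (Fin s) (Fin s) ℂ)
    (hE : IsQChannel E) (hR : IsQChannel R)
    (σA : Matrix (Fin a) (Fin a) ℂ)
    (hσA : σA.PosSemidef) (hσAtr : σA.trace = 1)
    (hcorr : ∀ σB : Matrix (Fin b) (Fin b) ℂ, σB.PosSemidef → σB.trace = 1 →
      R (E (W * (σA ⊗ₖ σB) * Wᴴ)) = W * (σA ⊗ₖ σB) * Wᴴ) :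
    ∃ α : Fin a → ℂ, star α ⬝ᵥ α = 1 ∧
      ∃ Rα : Matrix (Fin s) (Fin s) ℂ → Matrix (Fin s) (Fin s) ℂ,
        IsQChannel Rα ∧
        ∀ σB : Matrix (Fin b) (Fin b) ℂ, σB.PosSemidef → σB.trace = 1 →
          Rα (E (W * (vecMulVec α (star α) ⊗ₖ σB) * Wᴴ))
            = W * (vecMulVec α (star α) ⊗ₖ σB) * Wᴴ := by
  obtain ⟨l, u, hl, hu, hσ⟩ := psd_decomp hσA
  have htrl : ∑ i, l i = 1 := by
    have h := hσAtr
    rw [hσ, trace_sum] at h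
    simp only [trace_smul, trace_vecMulVec] at h
    have h' : ∀ i, u i ⬝ᵥ star (u i) = 1 := fun i => by rw [dotProduct_comm, hu]
    simp only [h', smul_eq_mul, mul_one] at h
    exact_mod_cast h
  obtain ⟨i₀, hi₀⟩ : ∃ i, 0 < l i := by
    by_contra! hcon
    have : ∑ i, l i ≤ 0 := Finset.sum_nonpos fun i _ => hcon i
    linarith
  obtain ⟨T, hT, hTW⟩ := exists_reset W hW (u i₀) (hu i₀)
  refine ⟨u i₀, hu i₀, fun ρ => T (R ρ), hT.comp' hR, ?_⟩
  have hF : IsQChannel (fun ρ => T (R (E ρ))) := (hT.comp' hR).comp' hE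
  have hvpsd : ∀ {k : ℕ} (v : Fin k → ℂ), (vecMulVec v (star v)).PosSemidef :=
    fun v => posSemidef_vecMulVec_self_star v
  obtain ⟨τ, hτ, hστ⟩ : ∃ τ : Matrix (Fin a) (Fin a) ℂ, τ.PosSemidef ∧
      σA = (l i₀ : ℂ) • vecMulVec (u i₀) (star (u i₀)) + τ := by
    refine ⟨∑ i ∈ Finset.univ.erase i₀, (l i : ℂ) • vecMulVec (u i) (star (u i)), ?_, ?_⟩
    · exact posSemidef_sum _ fun i _ => (hvpsd _).smul (by exact_mod_cast hl i)
    · rw [hσ]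
      exact (Finset.add_sum_erase _ _ (Finset.mem_univ i₀)).symm
  have pure : ∀ ψ : Fin b → ℂ, star ψ ⬝ᵥ ψ = 1 →
      T (R (E (W * (vecMulVec (u i₀) (star (u i₀)) ⊗ₖ vecMulVec ψ (star ψ)) * Wᴴ)))
        = W * (vecMulVec (u i₀) (star (u i₀)) ⊗ₖ vecMulVec ψ (star ψ)) * Wᴴ := by
    intro ψ hψ
    obtain ⟨v, hv, hWv⟩ := W_rank_one W hW (u i₀) (hu i₀) ψ hψ
    have htv : ∀ {k : ℕ} (v : Fin k → ℂ), star v ⬝ᵥ v = 1 → (vecMulVec v (star v)).trace = 1 :=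
      fun v h => by rw [trace_vecMulVec, dotProduct_comm, h]
    have h1 : T (R (E (W * (σA ⊗ₖ vecMulVec ψ (star ψ)) * Wᴴ))) = vecMulVec v (star v) := by
      rw [hcorr _ (hvpsd ψ) (htv ψ hψ), hTW _ _ hσAtr, hWv]
    rw [hστ, add_kronecker, smul_kronecker, Matrix.mul_add, Matrix.add_mul, Matrix.mul_smul,
      Matrix.smul_mul] at h1
    have h2 := hF.map_add' ((l i₀ : ℂ) • (W * (vecMulVec (u i₀) (star (u i₀)) ⊗ₖ vecMulVec ψ (star ψ)) * Wᴴ))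
      (W * (τ ⊗ₖ vecMulVec ψ (star ψ)) * Wᴴ)
    rw [hF.map_smul'] at h2
    rw [h2] at h1
    rw [hWv] at h1 ⊢
    refine rank_one_dominated hi₀ (hF.map_psd (hvpsd v)) ?_
      (hF.map_psd ((hτ.kronecker (hvpsd ψ)).mul_mul_conjTranspose_same W)) h1.symm hv
    rw [hF.trace', htv v hv]
  intro σB hσB _
  obtain ⟨m, w, -, hw, hσBw⟩ := psd_decomp hσB
  have hdec : W * (vecMulVec (u i₀) (star (u i₀)) ⊗ₖ σB) * Wᴴ = ∑ i, (m i : ℂ) •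
      (W * (vecMulVec (u i₀) (star (u i₀)) ⊗ₖ vecMulVec (w i) (star (w i))) * Wᴴ) := by
    have : vecMulVec (u i₀) (star (u i₀)) ⊗ₖ σB = ∑ i, (m i : ℂ) •
        (vecMulVec (u i₀) (star (u i₀)) ⊗ₖ vecMulVec (w i) (star (w i))) := by
      conv_lhs => rw [hσBw]
      ext ⟨i, j⟩ ⟨k, l⟩
      simp only [kroneckerMap_apply, Matrix.sum_apply, Matrix.smul_apply, smul_eq_mul, Finset.mul_sum]
      refine Finset.sum_congr rfl fun i _ => ?_
      ring
    rw [this]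
    simp only [Matrix.mul_sum, Matrix.sum_mul, Matrix.mul_smul, Matrix.smul_mul]
  rw [hdec]
  refine (hF.map_sum' _ _).trans (Finset.sum_congr rfl fun i _ => ?_)
  rw [hF.map_smul']
  exact congrArg _ (pure (w i) (hw i))
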